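/- For k = 4 and every input list L, First Fit with cardinality constraint k satisfies FF(L) ≤ 2·OPT(L). That is, the absolute competitive ratio of First Fit for k = 4 is at most 2. -/

import Mathlib

/-!
The proof is a weighting argument, valid for `2 ≤ k ≤ 4`. An item of size `x` weighs `1` if
`x > 1/2`, it weighs `1/2` if `1/4 < x ≤ 1/2`, and it weighs `1/k` otherwise.

A feasible bin weighs at most `5/2 - 2/k`: it has at most `k` items, at most one exceeds `1/2`, and
the items above `1/4`, those above `1/2` counted twice, number at most three.

Two or more items of total size above `1`, each of weight at least `m`, together weigh at least
`1 + m`. So if a First Fit bin `B` weighs less than `1`, every item packed into a later bin weighs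
at least `1 + m - w(B)`, where `m` bounds the item weights in `B` and after it from below. Thus the
deficit `1 - w(B)` is paid for by an increase of the minimal item weight, which goes from `1/k` to
at most `1`, and the total deficit of all bins is at most `1 - 1/k`. For `k = 4` this leaves an
additive error of `3/4`, which disappears because both bin counts are integers.
-/

open scoped Classical
noncomputable section

/-- An input is a list of item sizes, each in (0,1]. -/
def ValidInput (L : List ℝ) : Prop := ∀ x ∈ L, 0 < x ∧ x ≤ 1

/-- A packing assigns a bin index to each item; it is feasible for cardinality
constraint `k` if every bin receives at most `k` items of total size at most 1. -/
def IsFeasible (k : ℕ) (L : List ℝ) (f : Fin L.length → ℕ) : Prop :=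
  ∀ b : ℕ,
    (Finset.univ.filter (fun i => f i = b)).card ≤ k ∧
    ∑ i ∈ Finset.univ.filter (fun i => f i = b), L.get i ≤ 1

/-- The number of bins used by a packing. -/
def binsUsed (L : List ℝ) (f : Fin L.length → ℕ) : ℕ :=
  (Finset.univ.image f).card

/-- The optimal (minimum) number of bins in a feasible packing of `L`. -/
def OPT (k : ℕ) (L : List ℝ) : ℕ :=
  sInf {n | ∃ f : Fin L.length → ℕ, IsFeasible k L f ∧ binsUsed L f = n}

/-- A deterministic online algorithm is a strategy: given the items seen so far
(ending with the item to be packed), it returns the bin index for that item. -/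
def onlinePacking (A : List ℝ → ℕ) (L : List ℝ) : Fin L.length → ℕ :=
  fun i => A (L.take (i.1 + 1))

/-- The strategy `A` is a valid online algorithm for cardinality constraint `k`
if on every valid input the induced packing is feasible. -/
def OnlineValid (k : ℕ) (A : List ℝ → ℕ) : Prop :=
  ∀ L : List ℝ, ValidInput L → IsFeasible k L (onlinePacking A L)

/-- The number of bins used by online algorithm `A` on input `L`. -/
def onlineBins (A : List ℝ → ℕ) (L : List ℝ) : ℕ :=
  binsUsed L (onlinePacking A L)

/-- The state of First Fit: a list of open bins (in order of opening),
each recorded as (number of items, total size). `ffFind` returns the index of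
the first bin that can receive an item of size `x` (it has at most `k-1` items
and the item fits); if none, the index of a new bin. -/
def ffFind (k : ℕ) (x : ℝ) : List (ℕ × ℝ) → ℕ
  | [] => 0
  | b :: bs => if b.1 < k ∧ b.2 + x ≤ 1 then 0 else ffFind k x bs + 1

/-- Update the First Fit state after packing an item of size `x`. -/
def ffUpdate (k : ℕ) (x : ℝ) : List (ℕ × ℝ) → List (ℕ × ℝ)
  | [] => [(1, x)]
  | b :: bs =>
      if b.1 < k ∧ b.2 + x ≤ 1 then (b.1 + 1, b.2 + x) :: bs
      else b :: ffUpdate k x bs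

/-- The final state of First Fit with cardinality constraint `k` on input `L`. -/
def ffState (k : ℕ) (L : List ℝ) : List (ℕ × ℝ) :=
  L.foldl (fun bs x => ffUpdate k x bs) []

/-- The number of bins used by First Fit with cardinality constraint `k` on `L`. -/
def FF (k : ℕ) (L : List ℝ) : ℕ := (ffState k L).length

/-- The bin index into which First Fit packs the `i`-th item of `L`. -/
def ffAssign (k : ℕ) (L : List ℝ) (i : Fin L.length) : ℕ :=
  ffFind k (L.get i) (ffState k (L.take i.1))

/-- The weight of an item of size `x` under cardinality constraint `k`. -/
def itemWeight (k : ℕ) (x : ℝ) : ℝ := if 1 / 2 < x then 1 else if 1 / 4 < x then 1 / 2 else 1 / k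

/-- The total weight of a bin, given as the list of its item sizes. -/
def binWeight (k : ℕ) (B : List ℝ) : ℝ := (B.map (itemWeight k)).sum

/-- The bin with item sizes `B` has room for one more item, of size `x`. -/
def HasRoom (k : ℕ) (B : List ℝ) (x : ℝ) : Prop := B.length < k ∧ B.sum + x ≤ 1

/-- The First Fit step on a state that records the sizes of the items in every bin. It refines
`ffUpdate`, whose state does not determine the weights of the bins. -/
def ffUpdateContents (k : ℕ) (x : ℝ) : List (List ℝ) → List (List ℝ)
  | [] => [[x]]
  | B :: bs => if HasRoom k B x then (x :: B) :: bs else B :: ffUpdateContents k x bs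

/-- The bins produced by First Fit, in order of opening, each given as the list of its item
sizes. -/
def ffContents (k : ℕ) (L : List ℝ) : List (List ℝ) :=
  L.foldl (fun bs x => ffUpdateContents k x bs) []

/-- The relation of an earlier bin `B` to a later bin `C` under First Fit: no item of `C` could be
added to `B`. -/
def RejectsAll (k : ℕ) (B C : List ℝ) : Prop := ∀ y ∈ C, ¬ HasRoom k B y

section

variable {k : ℕ}

/-! ### The contents of First Fit bins -/

lemma ffContents_concat (k : ℕ) (L : List ℝ) (x : ℝ) :
    ffContents k (L ++ [x]) = ffUpdateContents k x (ffContents k L) := by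
  simp only [ffContents, List.foldl_append, List.foldl_cons, List.foldl_nil]

lemma map_ffUpdateContents (k : ℕ) (x : ℝ) (bs : List (List ℝ)) :
    (ffUpdateContents k x bs).map (fun B => (B.length, B.sum)) =
      ffUpdate k x (bs.map fun B => (B.length, B.sum)) := by
  induction bs with
  | nil => simp [ffUpdateContents, ffUpdate]
  | cons B bs ih =>
    by_cases h : HasRoom k B x
    · simp only [ffUpdateContents, ffUpdate, List.map_cons, if_pos h,
        if_pos (show B.length < k ∧ B.sum + x ≤ 1 from h), List.length_cons, List.sum_cons,
        add_comm x]
    · simp only [ffUpdateContents, ffUpdate, List.map_cons, if_neg h,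
        if_neg (show ¬ (B.length < k ∧ B.sum + x ≤ 1) from h), ih]

lemma map_ffContents (k : ℕ) (L : List ℝ) :
    (ffContents k L).map (fun B => (B.length, B.sum)) = ffState k L := by
  induction L using List.reverseRecOn with
  | nil => rfl
  | append_singleton L x ih =>
    rw [ffContents_concat, map_ffUpdateContents, ih]
    simp only [ffState, List.foldl_append, List.foldl_cons, List.foldl_nil]

lemma length_ffContents (k : ℕ) (L : List ℝ) : (ffContents k L).length = FF k L := by
  rw [FF, ← map_ffContents, List.length_map]

lemma flatten_ffUpdateContents_perm (k : ℕ) (x : ℝ) (bs : List (List ℝ)) :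
    (ffUpdateContents k x bs).flatten.Perm (x :: bs.flatten) := by
  induction bs with
  | nil => simp [ffUpdateContents]
  | cons B bs ih =>
    by_cases h : HasRoom k B x
    · simp [ffUpdateContents, h]
    · simp only [ffUpdateContents, if_neg h, List.flatten_cons]
      exact (ih.append_left B).trans List.perm_middle

lemma flatten_ffContents_perm (k : ℕ) (L : List ℝ) : (ffContents k L).flatten.Perm L := by
  induction L using List.reverseRecOn with
  | nil => exact List.Perm.nil
  | append_singleton L x ih =>
    rw [ffContents_concat]
    exact (flatten_ffUpdateContents_perm k x _).trans
      ((ih.cons x).trans (List.perm_append_singleton x L).symm)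

lemma sum_map_binWeight_ffContents (k : ℕ) (L : List ℝ) :
    ((ffContents k L).map (binWeight k)).sum = (L.map (itemWeight k)).sum := by
  rw [← ((flatten_ffContents_perm k L).map _).sum_eq, List.map_flatten, List.sum_flatten,
    List.map_map]
  rfl

lemma nil_notMem_ffUpdateContents (k : ℕ) (x : ℝ) {bs : List (List ℝ)} (hbs : [] ∉ bs) :
    [] ∉ ffUpdateContents k x bs := by
  induction bs with
  | nil => simp [ffUpdateContents]
  | cons B bs ih =>
    obtain ⟨hB, hbs⟩ := List.ne_and_not_mem_of_not_mem_cons hbs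
    by_cases h : HasRoom k B x
    · simp [ffUpdateContents, h, hbs]
    · simp [ffUpdateContents, h, hB, ih hbs]

lemma nil_notMem_ffContents (k : ℕ) (L : List ℝ) : [] ∉ ffContents k L := by
  induction L using List.reverseRecOn with
  | nil => exact List.not_mem_nil
  | append_singleton L x ih =>
    rw [ffContents_concat]
    exact nil_notMem_ffUpdateContents k x ih

lemma HasRoom.of_cons {B : List ℝ} {x y : ℝ} (hx : 0 ≤ x) (h : HasRoom k (x :: B) y) :
    HasRoom k B y := by
  obtain ⟨hlen, hsum⟩ := h
  rw [List.length_cons] at hlen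
  rw [List.sum_cons] at hsum
  exact ⟨by omega, by linarith⟩

lemma pairwise_rejectsAll_ffUpdateContents {x : ℝ} (hx : 0 ≤ x) {bs : List (List ℝ)}
    (hbs : bs.Pairwise (RejectsAll k)) : (ffUpdateContents k x bs).Pairwise (RejectsAll k) := by
  induction bs with
  | nil => exact List.pairwise_singleton _ _
  | cons B bs ih =>
    obtain ⟨hB, hbs⟩ := List.pairwise_cons.1 hbs
    by_cases h : HasRoom k B x
    · simp only [ffUpdateContents, if_pos h, List.pairwise_cons]
      exact ⟨fun C hC y hy hroom => hB C hC y hy (hroom.of_cons hx), hbs⟩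
    · simp only [ffUpdateContents, if_neg h, List.pairwise_cons]
      refine ⟨fun C hC y hy => ?_, ih hbs⟩
      have hmem : y ∈ x :: bs.flatten :=
        (flatten_ffUpdateContents_perm k x bs).mem_iff.1 (List.mem_flatten_of_mem hC hy)
      rcases List.mem_cons.1 hmem with rfl | hmem
      · exact h
      · obtain ⟨D, hD, hyD⟩ := List.mem_flatten.1 hmem
        exact hB D hD y hyD

lemma pairwise_rejectsAll_ffContents {L : List ℝ} (hL : ∀ x ∈ L, 0 ≤ x) :
    (ffContents k L).Pairwise (RejectsAll k) := by
  induction L using List.reverseRecOn with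
  | nil => exact List.Pairwise.nil
  | append_singleton L x ih =>
    rw [ffContents_concat]
    exact pairwise_rejectsAll_ffUpdateContents (hL x (by simp))
      (ih fun y hy => hL y (List.mem_append_left _ hy))

/-! ### Weights -/

lemma itemWeight_of_half_lt (k : ℕ) {x : ℝ} (hx : 1 / 2 < x) : itemWeight k x = 1 := if_pos hx

lemma itemWeight_of_quarter_lt (k : ℕ) {x : ℝ} (hx : 1 / 4 < x) (hx' : x ≤ 1 / 2) :
    itemWeight k x = 1 / 2 := by
  rw [itemWeight, if_neg hx'.not_gt, if_pos hx]

lemma itemWeight_nonneg (k : ℕ) (x : ℝ) : 0 ≤ itemWeight k x := by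
  unfold itemWeight; split_ifs <;> positivity

lemma one_div_le_half (hk : 2 ≤ k) : (1 : ℝ) / k ≤ 1 / 2 :=
  one_div_le_one_div_of_le two_pos (by exact_mod_cast hk)

lemma one_div_le_itemWeight (hk : 2 ≤ k) (x : ℝ) : 1 / k ≤ itemWeight k x := by
  have := one_div_le_half hk
  unfold itemWeight; split_ifs <;> linarith

lemma ceil_four_mul_le_itemWeight (hk : 0 < k) (hk4 : k ≤ 4) {x : ℝ} (hx : x ≤ 1 / 2) :
    (⌈4 * x⌉₊ : ℝ) ≤ 4 * itemWeight k x := by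
  by_cases hx4 : 1 / 4 < x
  · have hceil : ⌈4 * x⌉₊ ≤ 2 := Nat.ceil_le.2 (by push_cast; linarith)
    rw [itemWeight_of_quarter_lt k hx4 hx]
    exact (Nat.cast_le.2 hceil).trans (by norm_num)
  · have hceil : ⌈4 * x⌉₊ ≤ 1 := Nat.ceil_le.2 (by push_cast; linarith)
    have hquarter : (1 : ℝ) / 4 ≤ 1 / k :=
      one_div_le_one_div_of_le (by exact_mod_cast hk) (by exact_mod_cast hk4)
    rw [itemWeight, if_neg hx.not_gt, if_neg hx4]
    exact (Nat.cast_le.2 hceil).trans (by push_cast; linarith)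

@[simp]
lemma binWeight_cons (k : ℕ) (x : ℝ) (B : List ℝ) :
    binWeight k (x :: B) = itemWeight k x + binWeight k B := by
  simp only [binWeight, List.map_cons, List.sum_cons]

lemma binWeight_nonneg (k : ℕ) (B : List ℝ) : 0 ≤ binWeight k B :=
  List.sum_nonneg (by simpa using fun x _ => itemWeight_nonneg k x)

lemma itemWeight_le_binWeight (k : ℕ) {x : ℝ} {B : List ℝ} (hx : x ∈ B) :
    itemWeight k x ≤ binWeight k B :=
  List.single_le_sum (by simpa using fun x _ => itemWeight_nonneg k x) _ (List.mem_map_of_mem hx)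

lemma one_le_binWeight_of_le_length (hk : 2 ≤ k) {B : List ℝ} (hB : k ≤ B.length) :
    1 ≤ binWeight k B := by
  have hsum := List.card_nsmul_le_sum (B.map (itemWeight k)) (1 / k)
    (by simpa using fun x _ => one_div_le_itemWeight hk x)
  rw [List.length_map, nsmul_eq_mul, mul_one_div] at hsum
  have hk0 : (0 : ℝ) < k := by exact_mod_cast two_pos.trans_le hk
  exact ((one_le_div hk0).2 (by exact_mod_cast hB)).trans hsum

lemma ceil_four_mul_sum_le_binWeight (hk : 0 < k) (hk4 : k ≤ 4) {B : List ℝ}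
    (hB : ∀ x ∈ B, x ≤ 1 / 2) : (⌈4 * B.sum⌉₊ : ℝ) ≤ 4 * binWeight k B := by
  induction B with
  | nil => simp [binWeight]
  | cons x B ih =>
    obtain ⟨hx, hB⟩ := List.forall_mem_cons.1 hB
    calc (⌈4 * (x :: B).sum⌉₊ : ℝ)
        ≤ ⌈4 * x⌉₊ + ⌈4 * B.sum⌉₊ := by
          rw [List.sum_cons, mul_add]
          exact_mod_cast Nat.ceil_add_le _ _
      _ ≤ 4 * itemWeight k x + 4 * binWeight k B :=
          add_le_add (ceil_four_mul_le_itemWeight hk hk4 hx) (ih hB)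
      _ = 4 * binWeight k (x :: B) := by rw [binWeight_cons, mul_add]

lemma one_le_binWeight_of_three_quarters_lt_sum (hk : 0 < k) (hk4 : k ≤ 4) {B : List ℝ}
    (hB : 3 / 4 < B.sum) : 1 ≤ binWeight k B := by
  by_cases hbig : ∃ x ∈ B, 1 / 2 < x
  · obtain ⟨x, hx, hx2⟩ := hbig
    exact (itemWeight_of_half_lt k hx2).ge.trans (itemWeight_le_binWeight k hx)
  · push Not at hbig
    have hceil : 3 < ⌈4 * B.sum⌉₊ := Nat.lt_ceil.2 (by push_cast; linarith)
    have hceil' : (4 : ℝ) ≤ ⌈4 * B.sum⌉₊ := by exact_mod_cast hceil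
    linarith [ceil_four_mul_sum_le_binWeight hk hk4 hbig]

/-! ### The weight of First Fit bins -/

/- If `x` or `y` is at most `1/4`, the other items have total size above `3/4` and weigh at least
`1`. If `x` or `y` exceeds `1/2`, it weighs `1` itself. Otherwise `x` and `y` together weigh `1`
and have total size at most `1`, so there is a third item. -/
lemma one_add_le_binWeight_of_one_lt_sum (hk : 0 < k) (hk4 : k ≤ 4) {m x y : ℝ} {B : List ℝ}
    (hm : ∀ z ∈ x :: y :: B, m ≤ itemWeight k z) (hsum : 1 < (x :: y :: B).sum) :
    1 + m ≤ binWeight k (x :: y :: B) := by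
  obtain ⟨hx, hy, hB⟩ : m ≤ itemWeight k x ∧ m ≤ itemWeight k y ∧ ∀ z ∈ B, m ≤ itemWeight k z := by
    simpa only [List.forall_mem_cons] using hm
  simp only [List.sum_cons] at hsum
  simp only [binWeight_cons]
  have hrest {z : ℝ} (hz : 3 / 4 < z + B.sum) : 1 ≤ itemWeight k z + binWeight k B := by
    simpa using one_le_binWeight_of_three_quarters_lt_sum (B := z :: B) hk hk4 (by simpa using hz)
  have hBnonneg := binWeight_nonneg k B
  rcases le_or_gt x (1 / 4) with hx4 | hx4
  · linarith [hrest (z := y) (by linarith)]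
  rcases le_or_gt y (1 / 4) with hy4 | hy4
  · linarith [hrest (z := x) (by linarith)]
  rcases lt_or_ge (1 / 2) x with hx2 | hx2
  · linarith [itemWeight_of_half_lt k hx2]
  rcases lt_or_ge (1 / 2) y with hy2 | hy2
  · linarith [itemWeight_of_half_lt k hy2]
  have hBne : B ≠ [] := by
    rintro rfl
    rw [List.sum_nil] at hsum
    linarith
  obtain ⟨z, hz⟩ := List.exists_mem_of_ne_nil B hBne
  linarith [itemWeight_of_quarter_lt k hx4 hx2, itemWeight_of_quarter_lt k hy4 hy2, hB z hz,
    itemWeight_le_binWeight k hz]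

lemma length_le_sum_binWeight_add (hk : 2 ≤ k) (hk4 : k ≤ 4) {bs : List (List ℝ)} {m : ℝ}
    (hm1 : m ≤ 1) (hm : ∀ B ∈ bs, ∀ x ∈ B, m ≤ itemWeight k x) (hne : [] ∉ bs)
    (hrej : bs.Pairwise (RejectsAll k)) :
    (bs.length : ℝ) ≤ (bs.map (binWeight k)).sum + (1 - m) := by
  induction bs generalizing m with
  | nil => simpa using hm1
  | cons B bs ih =>
    obtain ⟨hmB, hmbs⟩ := List.forall_mem_cons.1 hm
    obtain ⟨hBne, hbsne⟩ := List.ne_and_not_mem_of_not_mem_cons hne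
    obtain ⟨hB, hbsrej⟩ := List.pairwise_cons.1 hrej
    simp only [List.length_cons, List.map_cons, List.sum_cons, Nat.cast_add, Nat.cast_one]
    rcases le_or_gt 1 (binWeight k B) with hheavy | hlight
    · linarith [ih hm1 hmbs hbsne hbsrej]
    obtain ⟨x, D, rfl⟩ := List.exists_cons_of_ne_nil (Ne.symm hBne)
    have hlen : (x :: D).length < k := by
      by_contra! hlen
      exact hlight.not_ge (one_le_binWeight_of_le_length hk hlen)
    have hlater : ∀ C ∈ bs, ∀ y ∈ C, 1 + m - binWeight k (x :: D) ≤ itemWeight k y := by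
      intro C hC y hy
      have hover : 1 < (y :: x :: D).sum := by
        by_contra! hfit
        exact hB C hC y hy ⟨hlen, by rwa [List.sum_cons, add_comm] at hfit⟩
      have := one_add_le_binWeight_of_one_lt_sum (two_pos.trans_le hk) hk4
        (List.forall_mem_cons.2 ⟨hmbs C hC y hy, hmB⟩) hover
      rw [binWeight_cons] at this
      linarith
    have hmle : m ≤ binWeight k (x :: D) :=
      (hmB x List.mem_cons_self).trans (itemWeight_le_binWeight k List.mem_cons_self)
    linarith [ih (by linarith) hlater hbsne hbsrej]

lemma FF_le_sum_itemWeight_add (hk : 2 ≤ k) (hk4 : k ≤ 4) {L : List ℝ} (hL : ∀ x ∈ L, 0 ≤ x) :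
    (FF k L : ℝ) ≤ (L.map (itemWeight k)).sum + (1 - 1 / k) := by
  rw [← length_ffContents, ← sum_map_binWeight_ffContents]
  exact length_le_sum_binWeight_add hk hk4 (by linarith [one_div_le_half hk])
    (fun _ _ x _ => one_div_le_itemWeight hk x) (nil_notMem_ffContents k L)
    (pairwise_rejectsAll_ffContents hL)

/-! ### The weight of feasible bins -/

lemma itemWeight_eq_add_ite (k : ℕ) (x : ℝ) :
    itemWeight k x = 1 / k + (1 / 2 - 1 / k) * (if 1 / 4 < x then 1 else 0) +
      1 / 2 * (if 1 / 2 < x then 1 else 0) := by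
  unfold itemWeight
  split_ifs <;> linarith

section

variable {ι : Type*} {s : Finset ι} {a : ι → ℝ}

lemma sum_itemWeight_eq (k : ℕ) (s : Finset ι) (a : ι → ℝ) :
    ∑ i ∈ s, itemWeight k (a i) = s.card * (1 / k) +
      (1 / 2 - 1 / k) * (s.filter fun i => 1 / 4 < a i).card +
      1 / 2 * (s.filter fun i => 1 / 2 < a i).card := by
  simp only [itemWeight_eq_add_ite, Finset.sum_add_distrib, ← Finset.mul_sum, Finset.sum_boole,
    Finset.sum_const, nsmul_eq_mul]

lemma card_quarter_lt_add_card_half_lt_le_three (hpos : ∀ i ∈ s, 0 < a i)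
    (hsum : ∑ i ∈ s, a i ≤ 1) :
    (s.filter fun i => 1 / 4 < a i).card + (s.filter fun i => 1 / 2 < a i).card ≤ 3 := by
  rcases s.eq_empty_or_nonempty with rfl | hs
  · simp
  have hlt : ∑ i ∈ s, ((if 1 / 4 < a i then 1 else 0) + (if 1 / 2 < a i then 1 else 0) : ℝ) <
      ∑ i ∈ s, 4 * a i := by
    refine Finset.sum_lt_sum_of_nonempty hs fun i hi => ?_
    have := hpos i hi
    split_ifs <;> linarith
  rw [Finset.sum_add_distrib, Finset.sum_boole, Finset.sum_boole, ← Finset.mul_sum] at hlt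
  have hlt4 := hlt.trans_le (show 4 * ∑ i ∈ s, a i ≤ 4 by linarith)
  exact Nat.le_of_lt_succ (by exact_mod_cast hlt4)

lemma sum_itemWeight_le (hk : 2 ≤ k) (hpos : ∀ i ∈ s, 0 < a i) (hcard : s.card ≤ k)
    (hsum : ∑ i ∈ s, a i ≤ 1) : ∑ i ∈ s, itemWeight k (a i) ≤ 5 / 2 - 2 / k := by
  set q := (s.filter fun i => 1 / 4 < a i).card
  set h := (s.filter fun i => 1 / 2 < a i).card
  have hqh : q + h ≤ 3 := card_quarter_lt_add_card_half_lt_le_three hpos hsum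
  have hle : h ≤ q := Finset.card_le_card (Finset.monotone_filter_right s fun i _ hi => by linarith)
  have hk0 : (0 : ℝ) < k := by exact_mod_cast two_pos.trans_le hk
  have hfull : s.card * (1 / k : ℝ) ≤ 1 := by
    rw [mul_one_div]
    exact div_le_one_of_le₀ (by exact_mod_cast hcard) hk0.le
  have hq : (q : ℝ) ≤ 3 - h := le_sub_iff_add_le.2 (by exact_mod_cast hqh)
  have hh : (h : ℝ) ≤ 1 := by exact_mod_cast (by omega : h ≤ 1)
  calc ∑ i ∈ s, itemWeight k (a i)
      = s.card * (1 / k) + (1 / 2 - 1 / k) * q + 1 / 2 * h := sum_itemWeight_eq k s a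
    _ ≤ 1 + (1 / 2 - 1 / k) * (3 - h) + 1 / 2 * h := by
        have := sub_nonneg.2 (one_div_le_half hk)
        gcongr
    _ = 5 / 2 - 3 / k + 1 / k * h := by ring
    _ ≤ 5 / 2 - 3 / k + 1 / k * 1 := by gcongr
    _ = 5 / 2 - 2 / k := by ring

end

lemma sum_map_le_mul_binsUsed {L : List ℝ} {f : Fin L.length → ℕ} {w : ℝ → ℝ} {c : ℝ}
    (hw : ∀ b, ∑ i ∈ Finset.univ.filter (fun i => f i = b), w (L.get i) ≤ c) :
    (L.map w).sum ≤ c * binsUsed L f := by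
  calc (L.map w).sum = ∑ i : Fin L.length, w (L.get i) := by simp
    _ = ∑ b ∈ Finset.univ.image f, ∑ i ∈ Finset.univ.filter (fun i => f i = b), w (L.get i) :=
        (Finset.sum_fiberwise_of_maps_to (fun i hi => Finset.mem_image_of_mem f hi) _).symm
    _ ≤ (Finset.univ.image f).card • c := Finset.sum_le_card_nsmul _ _ _ fun b _ => hw b
    _ = c * binsUsed L f := by rw [nsmul_eq_mul, mul_comm, binsUsed]

/-! ### The optimal packing -/

lemma isFeasible_of_injective (hk : 1 ≤ k) {L : List ℝ} (hL : ∀ x ∈ L, x ≤ 1)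
    {f : Fin L.length → ℕ} (hf : f.Injective) : IsFeasible k L f := by
  intro b
  have hcard : (Finset.univ.filter fun i => f i = b).card ≤ 1 :=
    Finset.card_le_one.2 fun i hi j hj =>
      hf ((Finset.mem_filter.1 hi).2.trans (Finset.mem_filter.1 hj).2.symm)
  refine ⟨hcard.trans hk, ?_⟩
  calc ∑ i ∈ Finset.univ.filter (fun i => f i = b), L.get i
      ≤ (Finset.univ.filter fun i => f i = b).card • (1 : ℝ) :=
        Finset.sum_le_card_nsmul _ _ _ fun i _ => hL _ (L.get_mem i)
    _ ≤ 1 := by rw [nsmul_one]; exact_mod_cast hcard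

lemma exists_isFeasible_binsUsed_eq_OPT (hk : 1 ≤ k) {L : List ℝ} (hL : ∀ x ∈ L, x ≤ 1) :
    ∃ f : Fin L.length → ℕ, IsFeasible k L f ∧ binsUsed L f = OPT k L :=
  Nat.sInf_mem (s := {n | ∃ f : Fin L.length → ℕ, IsFeasible k L f ∧ binsUsed L f = n})
    ⟨_, Fin.val, isFeasible_of_injective hk hL Fin.val_injective, rfl⟩

lemma sum_itemWeight_le_mul_OPT (hk : 2 ≤ k) {L : List ℝ} (hL : ValidInput L) :
    (L.map (itemWeight k)).sum ≤ (5 / 2 - 2 / k) * OPT k L := by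
  obtain ⟨f, hf, hopt⟩ :=
    exists_isFeasible_binsUsed_eq_OPT (one_le_two.trans hk) fun x hx => (hL x hx).2
  rw [← hopt]
  exact sum_map_le_mul_binsUsed fun b =>
    sum_itemWeight_le hk (fun i _ => (hL _ (L.get_mem i)).1) (hf b).1 (hf b).2

theorem ff_k4_ub_general (hk : 2 ≤ k) (hk4 : k ≤ 4) (L : List ℝ) (hL : ValidInput L) :
    (FF k L : ℝ) ≤ (5 / 2 - 2 / k) * OPT k L + (1 - 1 / k) :=
  (FF_le_sum_itemWeight_add hk hk4 fun x hx => (hL x hx).1.le).trans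
    (add_le_add_left (sum_itemWeight_le_mul_OPT hk hL) _)

end

/-- For k = 4 and every input `L`, FF(L) ≤ 2·OPT(L): the absolute
competitive ratio of First Fit for k = 4 is at most 2. -/
theorem ff_k4_ub (L : List ℝ) (hL : ValidInput L) :
    (FF 4 L : ℝ) ≤ 2 * (OPT 4 L : ℝ) := by
  have hlt : (FF 4 L : ℝ) < 2 * OPT 4 L + 1 := by
    linarith [ff_k4_ub_general (k := 4) (by norm_num) le_rfl L hL]
  exact_mod_cast Nat.le_of_lt_succ (by exact_mod_cast hlt)
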